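/- arXiv:2103.15026 — 2 statements merged into one kernel-verified Lean document; each statement's English description precedes it below -/
import Mathlib

section
/- Let R be a division ring of characteristic p ≥ 0 and let σ ∈ Σ_n have cycle type λ = (λ_1, λ_2, …, λ_s) (with fixed points counted as parts equal to 1). Then the σ-invariant matrix ring S_n(σ,R) is a semisimple ring if and only if p does not divide λ_i for every 1 ≤ i ≤ s. -/
open Matrix

/-- The `σ`-invariant matrix ring `S_n(σ,R) = {a ∈ M_n(R) | a_{ij} = a_{σ(i)σ(j)}}`. -/
def invariantSubring (R : Type*) [Ring R] {n : ℕ} (σ : Equiv.Perm (Fin n)) :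
    Subring (Matrix (Fin n) (Fin n) R) where
  carrier := {a | ∀ i j, a i j = a (σ i) (σ j)}
  zero_mem' := fun i j => rfl
  one_mem' := fun i j => by
    simp [Matrix.one_apply, EmbeddingLike.apply_eq_iff_eq]
  add_mem' := fun {a b} ha hb i j => by
    simp only [Matrix.add_apply]; rw [ha i j, hb i j]
  neg_mem' := fun {a} ha i j => by
    simp only [Matrix.neg_apply]; rw [ha i j]
  mul_mem' := fun {a b} ha hb i j => by
    simp only [Matrix.mul_apply]
    calc ∑ k, a i k * b k j
        = ∑ k, a (σ i) (σ k) * b (σ k) (σ j) :=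
          Finset.sum_congr rfl fun k _ => by rw [← ha, ← hb]
      _ = ∑ k, a (σ i) k * b k (σ j) := Equiv.sum_comp σ fun k => a (σ i) k * b k (σ j)

/-- `σ ∈ Σ_n` has cycle type `(lam 0, …, lam (s-1))`, where fixed points are counted
as parts equal to `1`: the multiset of lengths of the disjoint cycles of `σ`, together
with one part `1` for each fixed point, is the multiset of values of `lam`. -/
def HasFullCycleType {n s : ℕ} (σ : Equiv.Perm (Fin n)) (lam : Fin s → ℕ) : Prop :=
  σ.cycleType + Multiset.replicate (n - σ.cycleType.sum) 1 = (List.ofFn lam : Multiset ℕ)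

/-!
The ring `S_n(σ, R)` is the ring of fixed points of `M_n(R)` under conjugation by `σ`. If the cycle
lengths of `σ` are units of `R`, then so is the order of `σ`, and averaging over the group
generated by `σ` is an `S_n(σ, R)`-bimodule retraction of the semisimple ring `M_n(R)` onto
`S_n(σ, R)`; semisimplicity passes to such retracts, as in Maschke's theorem.

Conversely a semisimple ring is von Neumann regular. If `v` is the indicator vector of a cycle of
length `ℓ`, then `x = v vᵀ` is `σ`-invariant, and `x y x = (vᵀ y v) x` for every matrix `y`. When
`y` is `σ`-invariant, `y v` is constant on the cycle, so `vᵀ y v` is a multiple of `ℓ`; hence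
`x y x = x` makes `ℓ` a unit.
-/

section Retract

variable {T : Type*} [Ring T] {S : Subring T} {E : T →ₗ[S] S}

theorem retraction_mem_of_mem_map_subtype (hmul : ∀ t (s : S), E (t * s) = E t * s)
    {I : Ideal S} {t : T} (ht : t ∈ Ideal.map S.subtype I) : E t ∈ I := by
  induction ht using Submodule.closure_induction with
  | zero => simp
  | add a b _ _ ha hb => simpa using I.add_mem ha hb
  | smul_mem r x hx =>
    obtain ⟨s, hs, rfl⟩ := hx
    rw [smul_eq_mul, S.subtype_apply, hmul]
    exact I.mul_mem_left (E r) hs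

theorem isSemisimpleRing_of_retraction [IsSemisimpleRing T] (hone : E 1 = 1)
    (hmul : ∀ t (s : S), E (t * s) = E t * s) : IsSemisimpleRing S := by
  refine (isSemisimpleModule_iff S S).2 ⟨fun I => ?_⟩
  obtain ⟨e, he, hI⟩ := IsSemisimpleRing.ideal_eq_span_idempotent (Ideal.map S.subtype I)
  have hEe : E e ∈ I :=
    retraction_mem_of_mem_map_subtype hmul (hI ▸ Ideal.mem_span_singleton_self e)
  have mul_e (x : S) (hx : x ∈ I) : x * e = (x : T) := by
    have hxe : (x : T) ∈ Ideal.span {e} := hI ▸ Ideal.mem_map_of_mem S.subtype hx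
    obtain ⟨a, ha⟩ := Ideal.mem_span_singleton'.1 hxe
    rw [← ha, mul_assoc, he.eq]
  have mul_Ee (x : S) (hx : x ∈ I) : x * E e = x :=
    calc x * E e = E (x • e) := (map_smul E x e).symm
      _ = E (x • 1) := by simp only [Subring.smul_def, smul_eq_mul, mul_e x hx, mul_one]
      _ = x := by rw [map_smul, hone, smul_eq_mul, mul_one]
  exact ⟨_, LinearMap.isCompl_of_proj (f := LinearMap.toSpanSingleton S I ⟨E e, hEe⟩)
    fun x => Subtype.ext (mul_Ee x x.2)⟩

end Retract

section FixedPoints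

theorem smul_inv_unit_natCast {M T : Type*} [Monoid M] [Semiring T] [MulSemiringAction M T]
    {k : ℕ} (hk : IsUnit (k : T)) (g : M) : g • (↑hk.unit⁻¹ : T) = ↑hk.unit⁻¹ := by
  have hfix : g • (k : T) = k := map_natCast (MulSemiringAction.toRingHom M T g) k
  apply Units.eq_inv_of_mul_eq_one_right
  calc g • (↑hk.unit⁻¹ : T) * k = g • (↑hk.unit⁻¹ * (k : T)) := by rw [smul_mul', hfix]
    _ = 1 := by rw [hk.val_inv_mul, smul_one]

variable {G T : Type*} [Group G] [Ring T] [MulSemiringAction G T]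

/-- The average `t ↦ |G|⁻¹ ∑ g, g • t` over a finite group `G` of automorphisms of a ring `T` in
which `|G|` is invertible, as a left-linear map onto the ring of fixed points. -/
noncomputable def fixedPointsAverage [Fintype G] (hG : IsUnit (Fintype.card G : T)) :
    T →ₗ[FixedPoints.subring T G] FixedPoints.subring T G where
  toFun t := ⟨↑hG.unit⁻¹ * ∑ g : G, g • t, fun h => by
    have hsum : h • ∑ g : G, g • t = ∑ g : G, g • t := by
      simpa [Finset.smul_sum, smul_smul] using Equiv.sum_comp (Equiv.mulLeft h) (· • t)
    rw [smul_mul', smul_inv_unit_natCast, hsum]⟩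
  map_add' a b := Subtype.ext <| by simp [Finset.sum_add_distrib, mul_add]
  map_smul' s t := Subtype.ext <| by
    have hcomm : Commute (↑hG.unit⁻¹ : T) s := (Nat.cast_commute _ (s : T)).units_inv_left
    have hs (g : G) : g • (s : T) = s := s.2 g
    simp [Subring.smul_def, smul_mul', hs, ← Finset.mul_sum, ← mul_assoc, hcomm.eq]

theorem fixedPointsAverage_one [Fintype G] (hG : IsUnit (Fintype.card G : T)) :
    fixedPointsAverage hG 1 = 1 :=
  Subtype.ext <| by simp [fixedPointsAverage]

theorem fixedPointsAverage_mul [Fintype G] (hG : IsUnit (Fintype.card G : T)) (t : T)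
    (s : FixedPoints.subring T G) :
    fixedPointsAverage hG (t * s) = fixedPointsAverage hG t * s := by
  have hs (g : G) : g • (s : T) = s := s.2 g
  exact Subtype.ext <| by simp [fixedPointsAverage, smul_mul', hs, Finset.sum_mul, mul_assoc]

theorem isSemisimpleRing_fixedPoints [Finite G] [IsSemisimpleRing T]
    (hG : IsUnit (Nat.card G : T)) : IsSemisimpleRing (FixedPoints.subring T G) := by
  have := Fintype.ofFinite G
  rw [Nat.card_eq_fintype_card] at hG
  exact isSemisimpleRing_of_retraction (fixedPointsAverage_one hG) (fixedPointsAverage_mul hG)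

end FixedPoints

section NatCast

variable {R : Type*} [Semiring R]

theorem isUnit_natCast_of_dvd {a b : ℕ} (hab : a ∣ b) (hb : IsUnit (b : R)) :
    IsUnit (a : R) := by
  obtain ⟨k, rfl⟩ := hab
  rw [Nat.cast_mul, (Nat.cast_commute a (k : R)).isUnit_mul_iff] at hb
  exact hb.1

theorem isUnit_natCast_multiset_lcm {M : Multiset ℕ} (hM : ∀ m ∈ M, IsUnit (m : R)) :
    IsUnit (M.lcm : R) := by
  refine isUnit_natCast_of_dvd (Multiset.lcm_dvd.2 fun _ => Multiset.dvd_prod) ?_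
  exact multiset_prod_mem (S := (IsUnit.submonoid R).comap (Nat.castRingHom R)) M hM

end NatCast

section Conjugation

/-- Permutations act on square matrices by conjugation with permutation matrices, that is, by
relabelling rows and columns simultaneously: `(σ • a) i j = a (σ⁻¹ i) (σ⁻¹ j)`. -/
def permConj (R ι : Type*) [NonUnitalNonAssocSemiring R] [Fintype ι] :
    Equiv.Perm ι →* RingAut (Matrix ι ι R) where
  toFun σ := reindexRingEquiv R σ
  map_one' := rfl
  map_mul' _ _ := rfl

theorem permConj_apply_apply {R ι : Type*} [NonUnitalNonAssocSemiring R] [Fintype ι]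
    (σ : Equiv.Perm ι) (a : Matrix ι ι R) (i j : ι) :
    permConj R ι σ a i j = a (σ.symm i) (σ.symm j) := rfl

variable {R : Type*} [Ring R] {n : ℕ} (σ : Equiv.Perm (Fin n))

theorem permConj_apply_eq_self_iff {a : Matrix (Fin n) (Fin n) R} :
    permConj R (Fin n) σ a = a ↔ a ∈ invariantSubring R σ := by
  refine ⟨fun h i j => ?_, fun h => Matrix.ext fun i j => ?_⟩
  · simpa [permConj_apply_apply] using congrFun₂ h (σ i) (σ j)
  · simpa [permConj_apply_apply] using h (σ.symm i) (σ.symm j)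

theorem invariantSubring_eq_fixedPoints : invariantSubring R σ =
    FixedPoints.subring (Matrix (Fin n) (Fin n) R) (Subgroup.zpowers (permConj R (Fin n) σ)) := by
  ext a
  rw [← permConj_apply_eq_self_iff]
  refine ⟨?_, fun h => h ⟨_, Subgroup.mem_zpowers _⟩⟩
  rintro h ⟨_, k, rfl⟩
  exact MulAction.mem_fixedBy_zpow (g := permConj R (Fin n) σ) h k

theorem isSemisimpleRing_invariantSubring_of_isUnit_orderOf [IsSemisimpleRing R]
    (hσ : IsUnit (orderOf σ : R)) : IsSemisimpleRing (invariantSubring R σ) := by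
  have : Finite (Subgroup.zpowers (permConj R (Fin n) σ)) :=
    ((permConj R (Fin n)).isOfFinOrder (isOfFinOrder_of_finite σ)).finite_zpowers
  rw [invariantSubring_eq_fixedPoints]
  apply isSemisimpleRing_fixedPoints
  rw [Nat.card_zpowers]
  simpa using (isUnit_natCast_of_dvd (orderOf_map_dvd (permConj R (Fin n)) σ) hσ).map
    (scalar (Fin n))

end Conjugation

theorem exists_mul_mul_self_eq_of_isSemisimpleRing {S : Type*} [Ring S] [IsSemisimpleRing S]
    (x : S) : ∃ y, x * y * x = x := by
  obtain ⟨e, he, hI⟩ := IsSemisimpleRing.ideal_eq_span_idempotent (Ideal.span {x})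
  obtain ⟨a, ha⟩ := Ideal.mem_span_singleton'.1 (hI ▸ Ideal.mem_span_singleton_self x)
  obtain ⟨y, hy⟩ := Ideal.mem_span_singleton'.1 (hI.symm ▸ Ideal.mem_span_singleton_self e)
  exact ⟨y, by rw [mul_assoc, hy, ← ha, mul_assoc, he.eq]⟩

section CycleIndicator

theorem eq_of_sameCycle_of_forall_apply_eq {α β : Type*} {σ : Equiv.Perm α} {f : α → β}
    (hf : ∀ i, f (σ i) = f i) {i j : α} (hij : σ.SameCycle i j) : f i = f j := by
  have hpow (m : ℕ) (x : α) : f ((σ ^ m) x) = f x := by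
    have hsemi : Function.Semiconj f σ id := hf
    simpa [Equiv.Perm.iterate_eq_pow] using hsemi.iterate_right m x
  obtain ⟨k | k, rfl⟩ := hij
  · exact (hpow k i).symm
  · rw [← hpow (k + 1) ((σ ^ Int.negSucc k) i), zpow_negSucc, ← Equiv.Perm.mul_apply,
      mul_inv_cancel, Equiv.Perm.one_apply]

variable {R : Type*} [Ring R] {n : ℕ} {σ : Equiv.Perm (Fin n)}

theorem vecMulVec_mem_invariantSubring {v w : Fin n → R} (hv : ∀ i, v (σ i) = v i)
    (hw : ∀ i, w (σ i) = w i) : vecMulVec v w ∈ invariantSubring R σ := fun i j => by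
  simp only [vecMulVec_apply, hv, hw]

theorem mulVec_apply_perm_of_mem_invariantSubring {a : Matrix (Fin n) (Fin n) R}
    (ha : a ∈ invariantSubring R σ) {v : Fin n → R} (hv : ∀ i, v (σ i) = v i) (i : Fin n) :
    (a *ᵥ v) (σ i) = (a *ᵥ v) i :=
  calc ∑ k, a (σ i) k * v k = ∑ k, a (σ i) (σ k) * v (σ k) := (Equiv.sum_comp σ _).symm
    _ = ∑ k, a i k * v k := by simp only [hv, ← ha i _]

theorem isUnit_card_of_isCycleOn [IsSemisimpleRing (invariantSubring R σ)] {s : Finset (Fin n)}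
    (hs : σ.IsCycleOn s) (hne : s.Nonempty) : IsUnit (s.card : R) := by
  obtain ⟨a, ha⟩ := hne
  let v : Fin n → R := fun i => if i ∈ s then 1 else 0
  have hv (i : Fin n) : v (σ i) = v i := if_congr hs.apply_mem_iff rfl rfl
  obtain ⟨⟨y, hy⟩, hxyx⟩ := exists_mul_mul_self_eq_of_isSemisimpleRing
    (⟨vecMulVec v v, vecMulVec_mem_invariantSubring hv hv⟩ : invariantSubring R σ)
  have hconst (i : Fin n) (hi : i ∈ s) : (y *ᵥ v) i = (y *ᵥ v) a :=
    eq_of_sameCycle_of_forall_apply_eq (mulVec_apply_perm_of_mem_invariantSubring hy hv)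
      (hs.2 hi ha)
  have hdot : v ⬝ᵥ y *ᵥ v = s.card * (y *ᵥ v) a := by
    simp [dotProduct, v, Finset.sum_ite_mem, Finset.sum_congr rfl hconst]
  have hmul : (s.card : R) * (y *ᵥ v) a = 1 := by
    have := congrFun₂ (congrArg Subtype.val hxyx) a a
    simpa [vecMulVec_mul, vecMul_vecMulVec, ← dotProduct_mulVec, hdot, vecMulVec_apply, v, ha]
      using this
  exact isUnit_iff_exists.2 ⟨_, hmul, (Nat.cast_commute s.card _).eq.symm.trans hmul⟩

end CycleIndicator

theorem isSemisimpleRing_invariantSubring_iff_isUnit_cycleType {R : Type*} [Ring R]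
    [IsSemisimpleRing R] {n : ℕ} (σ : Equiv.Perm (Fin n)) :
    IsSemisimpleRing (invariantSubring R σ) ↔ ∀ m ∈ σ.cycleType, IsUnit (m : R) := by
  refine ⟨fun _ m hm => ?_, fun h => ?_⟩
  · rw [Equiv.Perm.cycleType_def, Multiset.mem_map] at hm
    obtain ⟨c, hc, rfl⟩ := hm
    exact isUnit_card_of_isCycleOn (Equiv.Perm.isCycleOn_support_of_mem_cycleFactorsFinset hc)
      (Equiv.Perm.mem_cycleFactorsFinset_iff.1 hc).1.nonempty_support
  · apply isSemisimpleRing_invariantSubring_of_isUnit_orderOf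
    rw [← Equiv.Perm.lcm_cycleType]
    exact isUnit_natCast_multiset_lcm h

theorem invariantSubring_isSemisimpleRing_iff_general (R : Type*) [Ring R] [IsSemisimpleRing R]
    {n s : ℕ} (σ : Equiv.Perm (Fin n)) (lam : Fin s → ℕ) (hcyc : HasFullCycleType σ lam) :
    IsSemisimpleRing (invariantSubring R σ) ↔ ∀ i, IsUnit (lam i : R) := by
  unfold HasFullCycleType at hcyc
  have hparts : (∀ i, IsUnit (lam i : R)) ↔
      ∀ m : ℕ, m ∈ σ.cycleType + Multiset.replicate (n - σ.cycleType.sum) 1 → IsUnit (m : R) := by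
    simp [hcyc, List.mem_ofFn]
  rw [isSemisimpleRing_invariantSubring_iff_isUnit_cycleType, hparts]
  simp +contextual [or_imp, Multiset.mem_replicate]

/-- Let `R` be a division ring of characteristic `p ≥ 0` and let `σ ∈ Σ_n` have cycle type
`λ = (λ_1,…,λ_s)` (fixed points counted as parts equal to `1`).  Then `S_n(σ,R)` is a
semisimple ring if and only if `p ∤ λ_i` for every `1 ≤ i ≤ s`. -/
theorem invariantSubring_isSemisimpleRing_iff
    (R : Type*) [DivisionRing R] (p : ℕ) [CharP R p]
    {n s : ℕ} (σ : Equiv.Perm (Fin n)) (lam : Fin s → ℕ)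
    (hpos : ∀ i, 1 ≤ lam i) (hmono : ∀ i j : Fin s, i ≤ j → lam j ≤ lam i)
    (hsum : ∑ i, lam i = n) (hcyc : HasFullCycleType σ lam) :
    IsSemisimpleRing (invariantSubring R σ) ↔ ∀ i, ¬ p ∣ lam i := by
  simp only [invariantSubring_isSemisimpleRing_iff_general R σ lam hcyc, isUnit_iff_ne_zero, ne_eq,
    CharP.cast_eq_zero_iff R p]
end

section
/- Let R be an algebraically closed field of characteristic p ≥ 0, let σ ∈ Σ_n have cycle type λ = (λ_1,…,λ_s) and τ ∈ Σ_m have cycle type μ = (μ_1,…,μ_t), and assume p ∤ λ_i for all 1 ≤ i ≤ s and p ∤ μ_j for all 1 ≤ j ≤ t. Then S_n(σ,R) and S_m(τ,R) are isomorphic as rings if and only if m = n and ε_λ(x) = ε_μ(x) in ℤ[x]. -/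
open Matrix

/-- `g_i(λ) = Σ_{1 ≤ k_1 < … < k_i ≤ s} gcd(λ_{k_1},…,λ_{k_i})`. -/
def gPart {s : ℕ} (lam : Fin s → ℕ) (i : ℕ) : ℕ :=
  ∑ T ∈ Finset.univ.powersetCard i, T.gcd lam

/-- The partition polynomial `ε_λ(x) = Σ_{i=0}^{s-1} (-1)^{s-1-i} (g_{i+1}(λ)/g_s(λ)) xⁱ ∈ ℤ[x]`. -/
noncomputable def partitionPoly {s : ℕ} (lam : Fin s → ℕ) : Polynomial ℤ :=
  ∑ i ∈ Finset.range s,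
    Polynomial.C ((-1 : ℤ) ^ (s - 1 - i) * ((gPart lam (i + 1) / gPart lam s : ℕ) : ℤ)) *
      Polynomial.X ^ i

/-!
`S_n(σ,R)` is the commutant of the permutation operator of `σ`. That operator is diagonalizable,
with eigenvalues the roots of unity `z` of order dividing some `λ_i`, and `z` has multiplicity
`d(z) = #{i | z ^ λ_i = 1}`. So `S_n(σ,R)` is the product over `z` of the matrix rings
`M_{d(z)}(R)`, and its isomorphism class is the multiset of the sizes `d(z)`. Counting the common
roots of `X ^ λ_i - 1` over `j`-element sets of indices gives `∑_z (d(z) choose j) = g_j(λ)` for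
`j ≥ 1`; these numbers determine the multiset of sizes. Finally, `ε_λ` is the sequence
`g_1(λ), …, g_s(λ)` up to signs and scale, and the scale is fixed by `g_1(λ) = n`.
-/

section Fibers

variable {α β : Type*} [Fintype α] [Fintype β]

lemma exists_equiv_of_card_fiber_eq {γ : Type*} [DecidableEq γ] {f : α → γ} {g : β → γ}
    (h : ∀ c, Fintype.card {a // f a = c} = Fintype.card {b // g b = c}) :
    ∃ e : α ≃ β, ∀ a, g (e a) = f a :=
  ⟨Equiv.ofFiberEquiv fun c => Fintype.equivOfCardEq (h c), Equiv.ofFiberEquiv_map _⟩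

lemma card_subtype_le_succ (f : α → ℕ) (k : ℕ) :
    Fintype.card {a // f a ≤ k + 1} =
      Fintype.card {a // f a ≤ k} + Fintype.card {a // f a = k + 1} := by
  simp only [Nat.le_succ_iff]
  exact Fintype.card_subtype_or_disjoint _ _ (Pi.disjoint_iff.2 fun a => by
    simp only [Prop.disjoint_iff, not_and]; lia)

lemma exists_equiv_of_card_le_eq {f : α → ℕ} {g : β → ℕ}
    (h : ∀ k, Fintype.card {a // f a ≤ k} = Fintype.card {b // g b ≤ k}) :
    ∃ e : α ≃ β, ∀ a, g (e a) = f a := by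
  refine exists_equiv_of_card_fiber_eq fun k => ?_
  cases k with
  | zero => simpa only [Nat.le_zero] using h 0
  | succ k =>
    have hsucc := h (k + 1)
    rwa [card_subtype_le_succ, card_subtype_le_succ, h k, Nat.add_left_cancel_iff] at hsucc

open Polynomial in
lemma card_fiber_eq_of_sum_choose_eq {f : α → ℕ} {g : β → ℕ}
    (h : ∀ j ≠ 0, ∑ a, (f a).choose j = ∑ b, (g b).choose j) {k : ℕ} (hk : k ≠ 0) :
    Fintype.card {a // f a = k} = Fintype.card {b // g b = k} := by
  -- Substituting `X - 1` for `X` turns the generating polynomial of the binomial sums into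
  -- `∑ a, X ^ f a`.
  have hshift : ∑ a, (1 + X : ℤ[X]) ^ f a =
      ∑ b, (1 + X : ℤ[X]) ^ g b + C ((Fintype.card α : ℤ) - Fintype.card β) := by
    ext j
    rcases eq_or_ne j 0 with rfl | hj
    · simp [coeff_one_add_X_pow]
    · simpa [coeff_one_add_X_pow, coeff_C, hj] using mod_cast h j hj
  have hmono := congrArg (fun q : ℤ[X] => (q.comp (X - 1)).coeff k) hshift
  simp only [add_comp, sum_comp, pow_comp, one_comp, X_comp, add_sub_cancel, C_comp,
    coeff_add, coeff_C_of_ne_zero hk, add_zero, finsetSum_coeff, coeff_X_pow, Finset.sum_boole,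
    Nat.cast_inj] at hmono
  simpa only [Fintype.card_subtype, eq_comm] using hmono

theorem exists_equiv_iff_sum_choose_eq {f : α → ℕ} {g : β → ℕ} (hf : ∀ a, 0 < f a)
    (hg : ∀ b, 0 < g b) :
    (∃ e : α ≃ β, ∀ a, g (e a) = f a) ↔
      ∀ j ≠ 0, ∑ a, (f a).choose j = ∑ b, (g b).choose j := by
  refine ⟨fun ⟨e, he⟩ j _ => ?_, fun h => exists_equiv_of_card_fiber_eq fun k => ?_⟩
  · simp only [← e.sum_comp, he]
  · rcases eq_or_ne k 0 with rfl | hk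
    · simp only [(hf _).ne', (hg _).ne', Fintype.card_eq_zero]
    · exact card_fiber_eq_of_sum_choose_eq h hk

end Fibers

section BoundedCentralIdempotents

/-- The central idempotents `e` of `A` such that every nilpotent element of the corner `eA` has
`j`-th power zero. Counting them for each `j` recovers the sizes of the factors of a product of
matrix rings. -/
def boundedCentralIdempotents (A : Type*) [MonoidWithZero A] (j : ℕ) : Set A :=
  {e | IsIdempotentElem e ∧ e ∈ Set.center A ∧ ∀ x, IsNilpotent x → (e * x) ^ j = 0}

lemma map_mem_boundedCentralIdempotents_iff {A B : Type*} [MonoidWithZero A] [MonoidWithZero B]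
    (φ : A ≃* B) {j : ℕ} {e : A} :
    φ e ∈ boundedCentralIdempotents B j ↔ e ∈ boundedCentralIdempotents A j := by
  refine and_congr ?_ (and_congr (MulEquivClass.apply_mem_center_iff φ) ?_)
  · rw [IsIdempotentElem, ← map_mul, φ.injective.eq_iff, IsIdempotentElem]
  · rw [φ.surjective.forall]
    simp only [IsNilpotent.map_iff φ.injective, ← map_mul, ← map_pow,
      EmbeddingLike.map_eq_zero_iff]

lemma card_boundedCentralIdempotents_congr {A B : Type*} [MonoidWithZero A] [MonoidWithZero B]
    (φ : A ≃* B) (j : ℕ) :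
    Nat.card (boundedCentralIdempotents A j) = Nat.card (boundedCentralIdempotents B j) :=
  Nat.card_congr (φ.toEquiv.subtypeEquiv fun _ => (map_mem_boundedCentralIdempotents_iff φ).symm)

lemma isNilpotent_pi_single {ι : Type*} [DecidableEq ι] {A : ι → Type*}
    [∀ i, MonoidWithZero (A i)] {i : ι} {x : A i} (hx : IsNilpotent x) :
    IsNilpotent (Pi.single i x : ∀ i, A i) := by
  obtain ⟨k, hk⟩ := hx
  refine ⟨k + 1, funext fun i' => ?_⟩
  rcases eq_or_ne i' i with rfl | hne
  · simp [pow_succ, hk]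
  · simp [hne]

lemma boundedCentralIdempotents_pi {ι : Type*} (A : ι → Type*) [∀ i, MonoidWithZero (A i)]
    (j : ℕ) :
    boundedCentralIdempotents (∀ i, A i) j =
      Set.univ.pi fun i => boundedCentralIdempotents (A i) j := by
  classical
  ext e
  simp only [boundedCentralIdempotents, Set.center_pi, Set.mem_ofPred_eq, Set.mem_univ_pi,
    forall_and, IsIdempotentElem, funext_iff, Pi.mul_apply, Pi.pow_apply, Pi.zero_apply]
  refine and_congr_right' (and_congr_right' ⟨fun h i x hx => ?_, fun h x hx i => ?_⟩)
  · simpa using h _ (isNilpotent_pi_single hx) i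
  · exact h i (x i) (hx.imp fun m hm => congrFun hm i)

end BoundedCentralIdempotents

section MatrixRings

variable {K : Type*} [CommRing K]

lemma exists_matrix_pow_eq_zero_iff [Nontrivial K] (k : ℕ) :
    ∃ x : Matrix (Fin k) (Fin k) K, ∀ j, x ^ j = 0 ↔ k ≤ j := by
  -- The witness is multiplication by the root of `X ^ k` in `K[X] / (X ^ k)`.
  let b := (AdjoinRoot.powerBasis' (Polynomial.monic_X_pow (R := K) k)).basis.reindex
    (finCongr (Polynomial.natDegree_X_pow k))
  refine ⟨Algebra.leftMulMatrix b (AdjoinRoot.root _), fun j => ?_⟩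
  rw [← map_pow, map_eq_zero_iff _ (Algebra.leftMulMatrix_injective b), ← AdjoinRoot.mk_X,
    ← map_pow, AdjoinRoot.mk_eq_zero, Polynomial.X_pow_dvd_iff]
  simp only [Polynomial.coeff_X_pow, ite_eq_right_iff, one_ne_zero, imp_false]
  exact ⟨fun h => not_lt.1 fun hjk => h j hjk rfl, fun hkj d hdk => (hdk.trans_le hkj).ne⟩

lemma matrix_pow_card_eq_zero_of_isNilpotent [IsReduced K] {ι : Type*} [Fintype ι] [DecidableEq ι]
    {x : Matrix ι ι K} (hx : IsNilpotent x) : x ^ Fintype.card ι = 0 := by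
  have hcoeff := Polynomial.isNilpotent_iff.1 (isNilpotent_charpoly_sub_pow_of_isNilpotent hx)
  have hcharpoly := sub_eq_zero.1 (Polynomial.ext fun i => (hcoeff i).eq_zero)
  simpa only [hcharpoly, Polynomial.aeval_X_pow] using x.aeval_self_charpoly

variable [IsDomain K]

lemma eq_zero_or_one_of_isIdempotentElem_of_mem_center {ι : Type*} [Fintype ι] [DecidableEq ι]
    [Nonempty ι] {e : Matrix ι ι K} (he : IsIdempotentElem e)
    (hc : e ∈ Set.center (Matrix ι ι K)) : e = 0 ∨ e = 1 := by
  rw [center_eq_range] at hc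
  obtain ⟨c, rfl⟩ := hc
  rw [IsIdempotentElem, ← map_mul, scalar_inj] at he
  exact (IsIdempotentElem.iff_eq_zero_or_one.1 he).imp (by simp [·]) (by simp [·])

lemma boundedCentralIdempotents_matrix {k j : ℕ} (hk : 0 < k) (hj : j ≠ 0) :
    boundedCentralIdempotents (Matrix (Fin k) (Fin k) K) j = if k ≤ j then {0, 1} else {0} := by
  have : NeZero k := ⟨hk.ne'⟩
  have h_zero : 0 ∈ boundedCentralIdempotents (Matrix (Fin k) (Fin k) K) j :=
    ⟨.zero, Set.zero_mem_center, fun x _ => by rw [zero_mul, zero_pow hj]⟩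
  have h_one : 1 ∈ boundedCentralIdempotents (Matrix (Fin k) (Fin k) K) j ↔ k ≤ j := by
    simp only [boundedCentralIdempotents, Set.mem_ofPred_eq, IsIdempotentElem.one,
      Set.one_mem_center, one_mul, true_and]
    refine ⟨fun h => ?_, fun hkj x hx => pow_eq_zero_of_le hkj ?_⟩
    · obtain ⟨x, hx⟩ := exists_matrix_pow_eq_zero_iff (K := K) k
      exact (hx j).1 (h x ⟨k, (hx k).2 le_rfl⟩)
    · simpa only [Fintype.card_fin] using matrix_pow_card_eq_zero_of_isNilpotent hx
  ext e
  constructor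
  · intro he
    rcases eq_zero_or_one_of_isIdempotentElem_of_mem_center he.1 he.2.1 with rfl | rfl
    · split_ifs <;> simp
    · simp [h_one.1 he]
  · split_ifs with hkj
    · rintro (rfl | rfl)
      exacts [h_zero, h_one.2 hkj]
    · rintro rfl
      exact h_zero

variable (K) in
lemma card_boundedCentralIdempotents_pi_matrix {α : Type*} [Fintype α] {f : α → ℕ}
    (hf : ∀ a, 0 < f a) {j : ℕ} (hj : j ≠ 0) :
    Nat.card (boundedCentralIdempotents (∀ a, Matrix (Fin (f a)) (Fin (f a)) K) j) =
      2 ^ Fintype.card {a // f a ≤ j} := by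
  have hcard (a : α) : Nat.card (boundedCentralIdempotents (Matrix (Fin (f a)) (Fin (f a)) K) j) =
      if f a ≤ j then 2 else 1 := by
    have : NeZero (f a) := ⟨(hf a).ne'⟩
    rw [boundedCentralIdempotents_matrix (hf a) hj, Nat.card_coe_set_eq]
    split_ifs
    · exact Set.ncard_pair zero_ne_one
    · exact Set.ncard_singleton 0
  rw [boundedCentralIdempotents_pi, Nat.card_congr (Equiv.Set.univPi _), Nat.card_pi]
  simp only [hcard, Finset.prod_ite, Finset.prod_const, one_pow, mul_one, Fintype.card_subtype]

theorem nonempty_pi_matrix_ringEquiv_iff {α β : Type*} [Finite α] [Finite β] {f : α → ℕ}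
    {g : β → ℕ} (hf : ∀ a, 0 < f a) (hg : ∀ b, 0 < g b) :
    Nonempty ((∀ a, Matrix (Fin (f a)) (Fin (f a)) K) ≃+*
        (∀ b, Matrix (Fin (g b)) (Fin (g b)) K)) ↔
      ∃ e : α ≃ β, ∀ a, g (e a) = f a := by
  constructor
  · rintro ⟨φ⟩
    cases nonempty_fintype α
    cases nonempty_fintype β
    refine exists_equiv_of_card_le_eq fun j => ?_
    rcases eq_or_ne j 0 with rfl | hj
    · simp only [Nat.le_zero, (hf _).ne', (hg _).ne', Fintype.card_eq_zero]
    · refine Nat.pow_right_injective le_rfl ?_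
      simpa only [card_boundedCentralIdempotents_pi_matrix K hf hj,
        card_boundedCentralIdempotents_pi_matrix K hg hj] using
        card_boundedCentralIdempotents_congr φ.toMulEquiv j
  · rintro ⟨e, he⟩
    obtain rfl : g ∘ e = f := funext he
    exact ⟨RingEquiv.piCongrLeft (fun b => Matrix (Fin (g b)) (Fin (g b)) K) e⟩

end MatrixRings

section Eigenspaces

lemma mem_centralizer_singleton_iff_commute {A : Type*} [Ring A] {a x : A} :
    a ∈ Subring.centralizer {x} ↔ Commute x a := by
  simp only [Subring.mem_centralizer_iff, Set.mem_singleton_iff, forall_eq, commute_iff_eq]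

variable {ι K V : Type*} [AddCommGroup V]

lemma isInternal_of_iSupIndep_of_sum_finrank_eq [Field K] [Module K V] [FiniteDimensional K V]
    [Fintype ι] [DecidableEq ι] {A : ι → Submodule K V} (hA : iSupIndep A)
    (hsum : ∑ i, Module.finrank K (A i) = Module.finrank K V) : DirectSum.IsInternal A := by
  have hinj : Function.Injective (DirectSum.coeLinearMap A) := hA.dfinsupp_lsum_injective
  refine ⟨hinj, (LinearMap.injective_iff_surjective_of_finrank_eq_finrank ?_).1 hinj⟩
  rw [Module.finrank_directSum, hsum]

variable [CommRing K] [Module K V] {f : Module.End K V}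

variable (f) in
/-- Restriction to the eigenspaces of `f` of the endomorphisms commuting with `f`. -/
def centralizerToPiEnd (z : ι → K) :
    Subring.centralizer {f} →+* ∀ i, Module.End K (f.eigenspace (z i)) :=
  RingHom.pi fun i =>
    { toFun a := a.1.restrict (Module.End.mapsTo_genEigenspace_of_comm
        (mem_centralizer_singleton_iff_commute.1 a.2) (z i) 1)
      map_one' := rfl
      map_mul' _ _ := rfl
      map_zero' := rfl
      map_add' _ _ := rfl }

variable [DecidableEq ι] {z : ι → K}

lemma endomorphism_ext_of_isInternal {A : ι → Submodule K V} (hA : DirectSum.IsInternal A)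
    {a b : Module.End K V} (hab : ∀ i, ∀ v ∈ A i, a v = b v) : a = b := by
  have hle : ⨆ i, A i ≤ LinearMap.eqLocus a b := iSup_le hab
  rw [hA.submodule_iSup_eq_top, top_le_iff] at hle
  exact LinearMap.eqLocus_eq_top.1 hle

lemma exists_endomorphism_of_isInternal {A : ι → Submodule K V} (hA : DirectSum.IsInternal A)
    (b : ∀ i, Module.End K (A i)) : ∃ a : Module.End K V, ∀ i (v : A i), a v = b i v := by
  let e := LinearEquiv.ofBijective (DirectSum.coeLinearMap A) hA
  refine ⟨DirectSum.coeLinearMap A ∘ₗ DirectSum.lmap b ∘ₗ e.symm.toLinearMap, fun i v => ?_⟩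
  have hv : e.symm v = DirectSum.lof K ι (fun i => A i) i v := by
    rw [LinearEquiv.symm_apply_eq]
    exact (DirectSum.coeLinearMap_lof A i v).symm
  simp [hv]

lemma centralizerToPiEnd_bijective (h : DirectSum.IsInternal fun i => f.eigenspace (z i)) :
    Function.Bijective (centralizerToPiEnd f z) := by
  constructor
  · refine fun a b hab => Subtype.ext (endomorphism_ext_of_isInternal h fun i v hv => ?_)
    exact congrArg Subtype.val (LinearMap.congr_fun (congrFun hab i) ⟨v, hv⟩)
  · intro b
    obtain ⟨a, ha⟩ := exists_endomorphism_of_isInternal h b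
    have hcomm : Commute f a := by
      refine endomorphism_ext_of_isInternal h fun i v hv => ?_
      lift v to f.eigenspace (z i) using hv
      simp only [Module.End.mul_apply, Module.End.mem_eigenspace_iff.1 v.2, map_smul, ha,
        Module.End.mem_eigenspace_iff.1 (b i v).2]
    exact ⟨⟨a, mem_centralizer_singleton_iff_commute.2 hcomm⟩,
      funext fun i => LinearMap.ext fun v => Subtype.ext (ha i v)⟩

/-- The commutant of a diagonalizable endomorphism is the product of the endomorphism rings of its
eigenspaces. -/
noncomputable def centralizerEquivPiEnd (h : DirectSum.IsInternal fun i => f.eigenspace (z i)) :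
    Subring.centralizer {f} ≃+* ∀ i, Module.End K (f.eigenspace (z i)) :=
  RingEquiv.ofBijective _ (centralizerToPiEnd_bijective h)

end Eigenspaces

section CycleStructure

variable {α β : Type*} [Fintype α] [Fintype β] [DecidableEq α] [DecidableEq β]

lemma cycleType_permCongr (e : α ≃ β) (f : Equiv.Perm α) :
    (e.permCongr f).cycleType = f.cycleType :=
  Equiv.Perm.cycleType_extendDomain (p := fun _ : β => True)
    (e.trans (Equiv.subtypeUnivEquiv fun _ => trivial).symm)

lemma exists_equiv_semiconj_of_cycleType_eq (hcard : Fintype.card α = Fintype.card β)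
    {f : Equiv.Perm α} {g : Equiv.Perm β} (h : f.cycleType = g.cycleType) :
    ∃ e : α ≃ β, Function.Semiconj e f g := by
  let e := Fintype.equivOfCardEq hcard
  obtain ⟨c, hc⟩ := isConj_iff.1 <| Equiv.Perm.isConj_iff_cycleType_eq.2 <|
    (cycleType_permCongr e f).trans h
  exact ⟨e.trans c, fun x => by simp [← hc]⟩

variable {ι : Type*} [DecidableEq ι] {γ : ι → Type*}

lemma sigmaCongrRight_mulSingle (i : ι) (f : Equiv.Perm (γ i)) :
    Equiv.Perm.sigmaCongrRight (Pi.mulSingle i f) =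
      f.extendDomain (Equiv.sigmaSubtype (β := γ) i).symm := by
  ext ⟨j, x⟩ : 1
  rcases eq_or_ne j i with rfl | hne
  · refine Eq.trans ?_ (f.extendDomain_apply_image (Equiv.sigmaSubtype (β := γ) j).symm x).symm
    simp [Equiv.sigmaSubtype]
  · have hj := f.extendDomain_apply_not_subtype (Equiv.sigmaSubtype (β := γ) i).symm
      (b := ⟨j, x⟩) hne
    simpa [hne] using hj.symm

lemma cycleType_sigmaCongrRight [Fintype ι] [∀ i, Fintype (γ i)] [∀ i, DecidableEq (γ i)]
    (f : ∀ i, Equiv.Perm (γ i)) :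
    (Equiv.Perm.sigmaCongrRight f).cycleType = ∑ i, (f i).cycleType := by
  have hdisj : Pairwise fun i j => (Equiv.Perm.sigmaCongrRight (Pi.mulSingle i (f i))).Disjoint
      (Equiv.Perm.sigmaCongrRight (Pi.mulSingle j (f j))) := by
    rintro i j hij ⟨k, x⟩
    rcases eq_or_ne k i with rfl | hne
    · exact .inr (by simp [hij])
    · exact .inl (by simp [hne])
  have hprod := (congrArg (Equiv.Perm.sigmaCongrRightHom γ) (Finset.noncommProd_mulSingle f)).symm
    |>.trans (Finset.map_noncommProd _ _ _ _)
  refine (congrArg Equiv.Perm.cycleType hprod).trans <|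
    (Equiv.Perm.Disjoint.cycleType_noncommProd (hdisj.set_pairwise _)).trans ?_
  simp only [sigmaCongrRight_mulSingle, Equiv.Perm.cycleType_extendDomain]

lemma cycleType_finRotate_eq_ite (n : ℕ) :
    (finRotate n).cycleType = if 2 ≤ n then {n} else 0 := by
  split_ifs with h
  · exact cycleType_finRotate_of_le h
  · have : Subsingleton (Fin n) := Fin.subsingleton_iff_le_one.2 (by lia)
    rw [Subsingleton.elim (finRotate n) 1, Equiv.Perm.cycleType_one]

end CycleStructure

section HasFullCycleType

variable {n s : ℕ} {σ : Equiv.Perm (Fin n)} {lam : Fin s → ℕ}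

lemma HasFullCycleType.cycleType_eq (h : HasFullCycleType σ lam) :
    σ.cycleType = ∑ i, if 2 ≤ lam i then {lam i} else 0 := by
  have hfilter := congrArg (Multiset.filter (2 ≤ ·)) h
  rw [Multiset.filter_add, Multiset.filter_eq_self.2 fun _ => Equiv.Perm.two_le_of_mem_cycleType,
    Multiset.filter_eq_nil.2 fun k hk => by simp [Multiset.eq_of_mem_replicate hk], add_zero,
    ← Fin.univ_val_map, Multiset.filter_eq_bind, Multiset.bind_map] at hfilter
  exact hfilter

lemma HasFullCycleType.pos (h : HasFullCycleType σ lam) (i : Fin s) : 0 < lam i := by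
  have hi : lam i ∈ σ.cycleType + Multiset.replicate (n - σ.cycleType.sum) 1 := by
    rw [h, Multiset.mem_coe]
    exact List.mem_ofFn.2 ⟨i, rfl⟩
  rcases Multiset.mem_add.1 hi with hcycle | hfixed
  · exact zero_lt_two.trans_le (Equiv.Perm.two_le_of_mem_cycleType hcycle)
  · exact (Multiset.eq_of_mem_replicate hfixed).symm ▸ one_pos

lemma HasFullCycleType.sum_eq (h : HasFullCycleType σ lam) : ∑ i, lam i = n := by
  have hle : σ.cycleType.sum ≤ n := by simpa using σ.sum_cycleType_le
  have hsum := congrArg Multiset.sum h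
  rw [Multiset.sum_add, Multiset.sum_replicate, Multiset.sum_coe, List.sum_ofFn] at hsum
  simp only [smul_eq_mul] at hsum
  lia

lemma HasFullCycleType.exists_equiv (h : HasFullCycleType σ lam) :
    ∃ e : (Σ i, Fin (lam i)) ≃ Fin n,
      Function.Semiconj e (Equiv.Perm.sigmaCongrRight fun i => finRotate (lam i)) σ := by
  refine exists_equiv_semiconj_of_cycleType_eq (by simp [h.sum_eq]) ?_
  simp only [cycleType_sigmaCongrRight, cycleType_finRotate_eq_ite, h.cycleType_eq]

end HasFullCycleType

section PermOperator

variable {α β : Type*} {K : Type*}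

variable (K) in
/-- The linear operator of precomposition with a permutation, i.e. the operator of its permutation
matrix `c_σ`. -/
def permOperator [CommSemiring K] (σ : Equiv.Perm α) : Module.End K (α → K) :=
  LinearMap.funLeft K K σ

lemma toLinAlgEquiv'_permMatrix [CommRing K] [Fintype α] [DecidableEq α]
    (σ : Equiv.Perm α) : toLinAlgEquiv' (σ.permMatrix K) = permOperator K σ :=
  LinearMap.ext fun v => by
    rw [toLinAlgEquiv'_apply, permMatrix_mulVec]
    rfl

lemma mem_eigenspace_permOperator [CommRing K] {σ : Equiv.Perm α} {z : K} {v : α → K} :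
    v ∈ (permOperator K σ).eigenspace z ↔ ∀ x, v (σ x) = z * v x :=
  Module.End.mem_eigenspace_iff.trans funext_iff

lemma comap_eigenspace_permOperator [CommRing K] (e : α ≃ β) {f : Equiv.Perm α}
    {g : Equiv.Perm β} (h : Function.Semiconj e f g) (z : K) :
    ((permOperator K f).eigenspace z).comap (LinearMap.funLeft K K e) =
      (permOperator K g).eigenspace z := by
  ext v
  rw [Submodule.mem_comap, mem_eigenspace_permOperator, mem_eigenspace_permOperator,
    ← e.forall_congr_right]
  simp [← h.eq]

lemma finrank_eigenspace_permOperator_eq_of_semiconj [CommRing K] (e : α ≃ β)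
    {f : Equiv.Perm α} {g : Equiv.Perm β} (h : Function.Semiconj e f g) (z : K) :
    Module.finrank K ((permOperator K g).eigenspace z) =
      Module.finrank K ((permOperator K f).eigenspace z) := by
  rw [← comap_eigenspace_permOperator e h]
  exact ((LinearEquiv.funCongrLeft K K e).ofSubmodule' _).finrank_eq

/-- Eigenvectors of a disjoint union of permutations are families of eigenvectors. -/
def eigenspacePermOperatorSigmaEquiv [CommRing K] {ι : Type*} {γ : ι → Type*}
    (f : ∀ i, Equiv.Perm (γ i)) (z : K) :
    (permOperator K (Equiv.Perm.sigmaCongrRight f)).eigenspace z ≃ₗ[K]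
      ∀ i, (permOperator K (f i)).eigenspace z where
  toFun v i := ⟨fun x => v.1 ⟨i, x⟩, mem_eigenspace_permOperator.2 fun x =>
    mem_eigenspace_permOperator.1 v.2 ⟨i, x⟩⟩
  invFun w := ⟨fun x => (w x.1).1 x.2, mem_eigenspace_permOperator.2 fun x =>
    mem_eigenspace_permOperator.1 (w x.1).2 x.2⟩
  map_add' _ _ := rfl
  map_smul' _ _ := rfl

lemma finrank_eigenspace_permOperator_sigmaCongrRight [Field K] {ι : Type*} [Fintype ι]
    {γ : ι → Type*} [∀ i, Finite (γ i)] (f : ∀ i, Equiv.Perm (γ i)) (z : K) :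
    Module.finrank K ((permOperator K (Equiv.Perm.sigmaCongrRight f)).eigenspace z) =
      ∑ i, Module.finrank K ((permOperator K (f i)).eigenspace z) := by
  rw [(eigenspacePermOperatorSigmaEquiv f z).finrank_eq, Module.finrank_pi_fintype]

lemma mem_eigenspace_permOperator_finRotate [CommRing K] {m : ℕ} {z : K} {v : Fin (m + 1) → K} :
    v ∈ (permOperator K (finRotate (m + 1))).eigenspace z ↔
      z ^ (m + 1) * v 0 = v 0 ∧ ∀ k, v k = z ^ (k : ℕ) * v 0 := by
  simp only [mem_eigenspace_permOperator, finRotate_apply]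
  constructor
  · intro h
    have hpow (k : Fin (m + 1)) : v k = z ^ (k : ℕ) * v 0 := by
      induction k using Fin.induction with
      | zero => simp
      | succ k ih => rw [← Fin.coeSucc_eq_succ, h, ih, Fin.coeSucc_eq_succ, Fin.val_succ, pow_succ',
          mul_assoc, Fin.val_castSucc]
    refine ⟨?_, hpow⟩
    have hlast := hpow (Fin.last m)
    rw [Fin.val_last] at hlast
    rw [pow_succ', mul_assoc, ← hlast, ← h, Fin.last_add_one]
  · rintro ⟨hz, hpow⟩ k
    induction k using Fin.lastCases with
    | last => rw [Fin.last_add_one, hpow (Fin.last m), Fin.val_last, ← mul_assoc, ← pow_succ', hz]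
    | cast k => rw [hpow, hpow k.castSucc, Fin.coeSucc_eq_succ, Fin.val_succ, pow_succ', mul_assoc,
        Fin.val_castSucc]

lemma finrank_eigenspace_permOperator_finRotate [Field K] [DecidableEq K] {n : ℕ} (hn : 0 < n)
    (z : K) :
    Module.finrank K ((permOperator K (finRotate n)).eigenspace z) =
      if z ^ n = 1 then 1 else 0 := by
  obtain ⟨m, rfl⟩ := Nat.exists_eq_add_one.2 hn
  split_ifs with hz
  · have hspan : (permOperator K (finRotate (m + 1))).eigenspace z =
        Submodule.span K {fun k : Fin (m + 1) => z ^ (k : ℕ)} := by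
      ext v
      rw [mem_eigenspace_permOperator_finRotate, hz, one_mul, Submodule.mem_span_singleton]
      constructor
      · exact fun ⟨_, hpow⟩ => ⟨v 0, funext fun k => by simp [hpow k, mul_comm]⟩
      · rintro ⟨c, rfl⟩
        simp [mul_comm]
    rw [hspan, finrank_span_singleton fun h0 => by simpa using congrFun h0 0]
  · rw [Submodule.finrank_eq_zero, Submodule.eq_bot_iff]
    intro v hv
    obtain ⟨hzv, hpow⟩ := mem_eigenspace_permOperator_finRotate.1 hv
    have hv0 : v 0 = 0 := by_contra fun hne => hz ((mul_eq_right₀ hne).1 hzv)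
    funext k
    rw [hpow, hv0, mul_zero, Pi.zero_apply]

end PermOperator

section InvariantSubring

variable {R : Type*} [CommRing R] {n : ℕ} (σ : Equiv.Perm (Fin n))

lemma mem_invariantSubring_iff_commute {a : Matrix (Fin n) (Fin n) R} :
    a ∈ invariantSubring R σ ↔ Commute (σ.permMatrix R) a := by
  rw [commute_iff_eq, Equiv.Perm.permMatrix, PEquiv.toMatrix_toPEquiv_mul,
    PEquiv.mul_toMatrix_toPEquiv, ← Matrix.ext_iff]
  refine forall_congr' fun i => ?_
  conv_rhs => rw [← σ.forall_congr_right]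
  simp only [submatrix_apply, id, Equiv.symm_apply_apply, eq_comm]

/-- `S_n(σ,R)` as the commutant of the permutation operator of `σ`. -/
noncomputable def invariantSubringEquivCentralizer :
    invariantSubring R σ ≃+* Subring.centralizer {permOperator R σ} :=
  (toLinAlgEquiv' : _ ≃ₐ[R] Module.End R (Fin n → R)).toRingEquiv.restrict _ _ fun a => by
    rw [mem_invariantSubring_iff_commute, mem_centralizer_singleton_iff_commute,
      ← toLinAlgEquiv'_permMatrix]
    exact (commute_map_iff toLinAlgEquiv'.injective).symm

end InvariantSubring

section RootsOfUnity

open scoped Classical in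
/-- The number of `i` with `z ^ lam i = 1`, which is the multiplicity of the eigenvalue `z` for a
permutation with cycle lengths `lam`. -/
noncomputable def eigenMult {ι K : Type*} [Fintype ι] [Monoid K] (lam : ι → ℕ) (z : K) : ℕ :=
  Finset.card {i | z ^ lam i = 1}

open scoped Classical in
/-- The eigenvalues of a permutation with cycle lengths `lam`: the roots of unity of order dividing
some `lam i`. -/
noncomputable def cycleRoots {ι : Type*} [Fintype ι] (K : Type*) [CommRing K] [IsDomain K]
    (lam : ι → ℕ) : Finset K :=
  Finset.univ.biUnion fun i => Polynomial.nthRootsFinset (lam i) 1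

variable {ι : Type*} {lam : ι → ℕ}

lemma pow_gcd_eq_one_iff_forall {M : Type*} [Monoid M] {T : Finset ι} {z : M} :
    z ^ T.gcd lam = 1 ↔ ∀ i ∈ T, z ^ lam i = 1 := by
  simp only [← orderOf_dvd_iff_pow_eq_one, Finset.dvd_gcd_iff]

variable [Fintype ι]

open scoped Classical in
lemma choose_eigenMult {M : Type*} [Monoid M] (z : M) (j : ℕ) :
    (eigenMult lam z).choose j =
      Finset.card {T ∈ Finset.univ.powersetCard j | ∀ i ∈ T, z ^ lam i = 1} := by
  rw [eigenMult, ← Finset.card_powersetCard]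
  congr 1
  ext T
  simp [Finset.mem_powersetCard, Finset.subset_iff, and_comm]

variable {K : Type*} [CommRing K] [IsDomain K]

lemma mem_cycleRoots (hlam : ∀ i, 0 < lam i) {z : K} :
    z ∈ cycleRoots K lam ↔ ∃ i, z ^ lam i = 1 := by
  simp [cycleRoots, Polynomial.mem_nthRootsFinset, hlam]

lemma eigenMult_pos (hlam : ∀ i, 0 < lam i) {z : K} (hz : z ∈ cycleRoots K lam) :
    0 < eigenMult lam z := by
  obtain ⟨i, hi⟩ := (mem_cycleRoots hlam).1 hz
  exact Finset.card_pos.2 ⟨i, by simpa using hi⟩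

lemma card_nthRootsFinset_one_of_hasEnoughRootsOfUnity (n : ℕ) [NeZero n]
    [HasEnoughRootsOfUnity K n] : (Polynomial.nthRootsFinset n (1 : K)).card = n := by
  obtain ⟨ζ, hζ⟩ := HasEnoughRootsOfUnity.exists_primitiveRoot K n
  exact hζ.card_nthRootsFinset

open scoped Classical in
lemma card_common_cycleRoots [∀ i, HasEnoughRootsOfUnity K (lam i)] (hlam : ∀ i, 0 < lam i)
    {T : Finset ι} (hT : T.Nonempty) :
    Finset.card {z ∈ cycleRoots K lam | ∀ i ∈ T, z ^ lam i = 1} = T.gcd lam := by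
  obtain ⟨i, hi⟩ := hT
  have : NeZero (lam i) := ⟨(hlam i).ne'⟩
  have hpos : 0 < T.gcd lam := Nat.pos_of_dvd_of_pos (Finset.gcd_dvd hi) (hlam i)
  have : NeZero (T.gcd lam) := ⟨hpos.ne'⟩
  have := HasEnoughRootsOfUnity.of_dvd K (Finset.gcd_dvd hi : T.gcd lam ∣ lam i)
  rw [← card_nthRootsFinset_one_of_hasEnoughRootsOfUnity (K := K) (T.gcd lam)]
  congr 1
  ext z
  rw [Finset.mem_filter, Polynomial.mem_nthRootsFinset hpos, pow_gcd_eq_one_iff_forall,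
    mem_cycleRoots hlam, and_iff_right_of_imp fun h => ⟨i, h i hi⟩]

theorem sum_choose_eigenMult [∀ i, HasEnoughRootsOfUnity K (lam i)] (hlam : ∀ i, 0 < lam i)
    {j : ℕ} (hj : j ≠ 0) :
    ∑ z ∈ cycleRoots K lam, (eigenMult lam z).choose j =
      ∑ T ∈ Finset.univ.powersetCard j, T.gcd lam := by
  classical
  simp only [choose_eigenMult]
  refine (Finset.sum_card_bipartiteAbove_eq_sum_card_bipartiteBelow _).trans <|
    Finset.sum_congr rfl fun T hT => ?_
  refine card_common_cycleRoots hlam (Finset.card_pos.1 ?_)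
  rw [(Finset.mem_powersetCard.1 hT).2]
  exact hj.bot_lt

end RootsOfUnity

section GPart

variable {s t : ℕ} {lam : Fin s → ℕ} {mu : Fin t → ℕ}

variable (lam) in
lemma gPart_one : gPart lam 1 = ∑ i, lam i := by
  simp [gPart, Finset.powersetCard_one]

variable (lam) in
lemma gPart_top : gPart lam s = Finset.univ.gcd lam := by
  have huniv : (Finset.univ : Finset (Fin s)).powersetCard s = {Finset.univ} := by
    simpa using Finset.powersetCard_self (Finset.univ : Finset (Fin s))
  rw [gPart, huniv, Finset.sum_singleton]

variable (lam) in
lemma gPart_top_dvd (j : ℕ) : gPart lam s ∣ gPart lam j := by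
  rw [gPart_top]
  exact Finset.dvd_sum fun T _ => Finset.gcd_mono (Finset.subset_univ T)

lemma gPart_ne_zero_iff (hlam : ∀ i, 0 < lam i) {j : ℕ} (hj : j ≠ 0) :
    gPart lam j ≠ 0 ↔ j ≤ s := by
  have hgcd (T : Finset (Fin s)) (hT : T ∈ Finset.univ.powersetCard j) : T.gcd lam ≠ 0 := by
    obtain ⟨i, hi⟩ : T.Nonempty := by
      rw [← Finset.card_ne_zero, (Finset.mem_powersetCard.1 hT).2]
      exact hj
    exact fun h0 => (hlam i).ne' (Finset.gcd_eq_zero_iff.1 h0 i hi)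
  have hnonempty : ((Finset.univ : Finset (Fin s)).powersetCard j).Nonempty ↔ j ≤ s := by
    rw [Finset.powersetCard_nonempty, Finset.card_fin]
  rw [← hnonempty, gPart, Ne, Finset.sum_eq_zero_iff]
  push Not
  exact ⟨fun ⟨T, hT, _⟩ => ⟨T, hT⟩, fun ⟨T, hT⟩ => ⟨T, hT, hgcd T hT⟩⟩

variable (lam) in
lemma gPart_top_mul_coeff_partitionPoly {i : ℕ} (hi : i < s) :
    (gPart lam s : ℤ) * (partitionPoly lam).coeff i =
      (-1) ^ (s - 1 - i) * gPart lam (i + 1) := by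
  simp only [partitionPoly, Polynomial.finsetSum_coeff, Polynomial.coeff_C_mul_X_pow,
    Finset.sum_ite_eq, Finset.mem_range, if_pos hi]
  rw [mul_left_comm, ← Nat.cast_mul, Nat.mul_div_cancel' (gPart_top_dvd lam _)]

lemma support_partitionPoly (hlam : ∀ i, 0 < lam i) :
    (partitionPoly lam).support = Finset.range s := by
  ext i
  rw [Polynomial.mem_support_iff, Finset.mem_range]
  constructor
  · intro hi
    by_contra hlt
    refine hi ?_
    simp only [partitionPoly, Polynomial.finsetSum_coeff, Polynomial.coeff_C_mul_X_pow,
      Finset.sum_ite_eq, Finset.mem_range, if_neg hlt]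
  · intro hi
    refine right_ne_zero_of_mul (a := (gPart lam s : ℤ)) ?_
    rw [gPart_top_mul_coeff_partitionPoly lam hi]
    have := (gPart_ne_zero_iff hlam i.succ_ne_zero).2 hi
    simpa using this

/-- The coefficients of `partitionPoly` only retain the ratios of the `gPart lam j`; the common
scale is recovered from `gPart lam 1 = ∑ i, lam i`. -/
lemma gPart_succ_eq_of_partitionPoly_eq {lam mu : Fin s → ℕ} (hmu : ∀ j, 0 < mu j)
    (hsum : ∑ j, mu j = ∑ i, lam i) (hpoly : partitionPoly lam = partitionPoly mu) {i : ℕ}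
    (hi : i < s) : gPart lam (i + 1) = gPart mu (i + 1) := by
  have hmul {k : ℕ} (hk : k < s) : (gPart lam s : ℤ) * (partitionPoly mu).coeff k =
      (-1) ^ (s - 1 - k) * gPart lam (k + 1) := by
    rw [← hpoly, gPart_top_mul_coeff_partitionPoly lam hk]
  have hs : 0 < s := Nat.zero_lt_of_lt hi
  have hcoeff : (partitionPoly mu).coeff 0 ≠ 0 := by
    rwa [← Polynomial.mem_support_iff, support_partitionPoly hmu, Finset.mem_range]
  have hscale : (gPart lam s : ℤ) = gPart mu s := by
    refine mul_right_cancel₀ hcoeff ?_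
    rw [hmul hs, gPart_top_mul_coeff_partitionPoly mu hs, zero_add, gPart_one, gPart_one, hsum]
  have hsucc := hmul hi
  rw [hscale, gPart_top_mul_coeff_partitionPoly mu hi] at hsucc
  exact_mod_cast (mul_left_cancel₀ (pow_ne_zero _ (by simp)) hsucc).symm

theorem sum_eq_and_partitionPoly_eq_iff (hlam : ∀ i, 0 < lam i) (hmu : ∀ j, 0 < mu j) :
    (∑ j, mu j = ∑ i, lam i ∧ partitionPoly lam = partitionPoly mu) ↔
      ∀ j ≠ 0, gPart lam j = gPart mu j := by
  constructor
  · rintro ⟨hsum, hpoly⟩ j hj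
    obtain rfl : s = t := by
      simpa [support_partitionPoly, hlam, hmu] using
        congrArg (fun q => q.support.card) hpoly
    by_cases hjs : j ≤ s
    · obtain ⟨i, rfl⟩ := Nat.exists_eq_succ_of_ne_zero hj
      exact gPart_succ_eq_of_partitionPoly_eq hmu hsum hpoly hjs
    · rw [not_ne_iff.1 (mt (gPart_ne_zero_iff hlam hj).1 hjs),
        not_ne_iff.1 (mt (gPart_ne_zero_iff hmu hj).1 hjs)]
  · intro h
    obtain rfl : s = t := by
      refine eq_of_forall_le_iff fun j => ?_
      rcases eq_or_ne j 0 with rfl | hj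
      · simp
      · rw [← gPart_ne_zero_iff hlam hj, h j hj, gPart_ne_zero_iff hmu hj]
    refine ⟨by rw [← gPart_one, ← gPart_one, h 1 one_ne_zero], ?_⟩
    refine Finset.sum_congr rfl fun i hi => ?_
    rw [h _ i.succ_ne_zero, h s (Nat.ne_zero_of_lt (Finset.mem_range.1 hi))]

end GPart

section Decomposition

variable {K : Type*} [Field K] {n s : ℕ} {σ : Equiv.Perm (Fin n)} {lam : Fin s → ℕ}

lemma HasFullCycleType.finrank_eigenspace (h : HasFullCycleType σ lam) (z : K) :
    Module.finrank K ((permOperator K σ).eigenspace z) = eigenMult lam z := by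
  classical
  obtain ⟨e, he⟩ := h.exists_equiv
  rw [finrank_eigenspace_permOperator_eq_of_semiconj e he,
    finrank_eigenspace_permOperator_sigmaCongrRight, eigenMult, Finset.card_filter]
  exact Finset.sum_congr rfl fun i _ => finrank_eigenspace_permOperator_finRotate (h.pos i) z

variable [∀ i, HasEnoughRootsOfUnity K (lam i)]

lemma HasFullCycleType.isInternal_eigenspace [DecidableEq K] (h : HasFullCycleType σ lam) :
    DirectSum.IsInternal fun z : cycleRoots K lam => (permOperator K σ).eigenspace (z : K) := by
  refine isInternal_of_iSupIndep_of_sum_finrank_eq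
    ((Module.End.eigenspaces_iSupIndep _).comp Subtype.val_injective) ?_
  have hsum := sum_choose_eigenMult (K := K) h.pos one_ne_zero
  simp only [Nat.choose_one_right, Finset.powersetCard_one, Finset.sum_map,
    Function.Embedding.coeFn_mk, Finset.gcd_singleton, normalize_eq, h.sum_eq] at hsum
  simp only [h.finrank_eigenspace, Module.finrank_fin_fun]
  rw [Finset.sum_coe_sort, hsum]

theorem HasFullCycleType.nonempty_invariantSubring_ringEquiv_pi (h : HasFullCycleType σ lam) :
    Nonempty (invariantSubring K σ ≃+* ∀ z : cycleRoots K lam,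
      Matrix (Fin (eigenMult lam (z : K))) (Fin (eigenMult lam (z : K))) K) := by
  classical
  have blocks (z : cycleRoots K lam) := algEquivMatrix (R := K)
    (Module.finBasisOfFinrankEq K _ (h.finrank_eigenspace (z : K)))
  exact ⟨(invariantSubringEquivCentralizer σ).trans <|
    (centralizerEquivPiEnd h.isInternal_eigenspace).trans <|
      RingEquiv.piCongrRight fun z => (blocks z).toRingEquiv⟩

end Decomposition

theorem invariantSubring_ringEquiv_iff_general (R : Type*) [Field R]
    {n m s t : ℕ} (σ : Equiv.Perm (Fin n)) (τ : Equiv.Perm (Fin m))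
    (lam : Fin s → ℕ) (mu : Fin t → ℕ)
    [∀ i, HasEnoughRootsOfUnity R (lam i)] [∀ j, HasEnoughRootsOfUnity R (mu j)]
    (hlam : HasFullCycleType σ lam) (hmu : HasFullCycleType τ mu) :
    Nonempty (invariantSubring R σ ≃+* invariantSubring R τ) ↔
      (m = n ∧ partitionPoly lam = partitionPoly mu) := by
  obtain ⟨eσ⟩ := hlam.nonempty_invariantSubring_ringEquiv_pi (K := R)
  obtain ⟨eτ⟩ := hmu.nonempty_invariantSubring_ringEquiv_pi (K := R)
  have hσpos (z : cycleRoots R lam) := eigenMult_pos hlam.pos z.2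
  have hτpos (z : cycleRoots R mu) := eigenMult_pos hmu.pos z.2
  calc Nonempty (invariantSubring R σ ≃+* invariantSubring R τ)
    _ ↔ Nonempty ((∀ z : cycleRoots R lam, Matrix (Fin (eigenMult lam (z : R)))
            (Fin (eigenMult lam (z : R))) R) ≃+*
          ∀ z : cycleRoots R mu, Matrix (Fin (eigenMult mu (z : R)))
            (Fin (eigenMult mu (z : R))) R) :=
      ⟨fun ⟨e⟩ => ⟨eσ.symm.trans (e.trans eτ)⟩, fun ⟨e⟩ => ⟨eσ.trans (e.trans eτ.symm)⟩⟩
    _ ↔ ∃ e : cycleRoots R lam ≃ cycleRoots R mu,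
          ∀ z, eigenMult mu (e z : R) = eigenMult lam (z : R) :=
      nonempty_pi_matrix_ringEquiv_iff hσpos hτpos
    _ ↔ ∀ j ≠ 0, ∑ z : cycleRoots R lam, (eigenMult lam (z : R)).choose j =
          ∑ z : cycleRoots R mu, (eigenMult mu (z : R)).choose j :=
      exists_equiv_iff_sum_choose_eq hσpos hτpos
    _ ↔ ∀ j ≠ 0, gPart lam j = gPart mu j := forall₂_congr fun j hj => by
      rw [Finset.sum_coe_sort (cycleRoots R lam) fun z => (eigenMult lam z).choose j,
        Finset.sum_coe_sort (cycleRoots R mu) fun z => (eigenMult mu z).choose j,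
        sum_choose_eigenMult hlam.pos hj, sum_choose_eigenMult hmu.pos hj, gPart, gPart]
    _ ↔ m = n ∧ partitionPoly lam = partitionPoly mu := by
      rw [← sum_eq_and_partitionPoly_eq_iff hlam.pos hmu.pos, hlam.sum_eq, hmu.sum_eq]

/-- Let `R` be an algebraically closed field of characteristic `p ≥ 0`, let `σ ∈ Σ_n` have
cycle type `λ = (λ_1,…,λ_s)` and `τ ∈ Σ_m` have cycle type `μ = (μ_1,…,μ_t)`, with
`p ∤ λ_i` and `p ∤ μ_j` for all `i, j`.  Then `S_n(σ,R) ≅ S_m(τ,R)` as rings if and only if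
`m = n` and `ε_λ(x) = ε_μ(x)` in `ℤ[x]`. -/
theorem invariantSubring_ringEquiv_iff
    (R : Type*) [Field R] [IsAlgClosed R] (p : ℕ) [CharP R p]
    {n m s t : ℕ} (σ : Equiv.Perm (Fin n)) (τ : Equiv.Perm (Fin m))
    (lam : Fin s → ℕ) (mu : Fin t → ℕ)
    (hlpos : ∀ i, 1 ≤ lam i) (hlmono : ∀ i j : Fin s, i ≤ j → lam j ≤ lam i)
    (hlsum : ∑ i, lam i = n) (hlcyc : HasFullCycleType σ lam)
    (hmpos : ∀ j, 1 ≤ mu j) (hmmono : ∀ i j : Fin t, i ≤ j → mu j ≤ mu i)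
    (hmsum : ∑ j, mu j = m) (hmcyc : HasFullCycleType τ mu)
    (hlp : ∀ i, ¬ p ∣ lam i) (hmp : ∀ j, ¬ p ∣ mu j) :
    Nonempty ((invariantSubring R σ) ≃+* (invariantSubring R τ)) ↔
      (m = n ∧ partitionPoly lam = partitionPoly mu) := by
  have (i : Fin s) : NeZero (lam i : R) := ⟨(CharP.cast_eq_zero_iff R p _).not.2 (hlp i)⟩
  have (j : Fin t) : NeZero (mu j : R) := ⟨(CharP.cast_eq_zero_iff R p _).not.2 (hmp j)⟩
  exact invariantSubring_ringEquiv_iff_general R σ τ lam mu hlcyc hmcyc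
end
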